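/- The second moment of the stable-1/2 bridge at time t is ∫₀^z u² f_{tT}(u;z) du = (t/T) z² { 1 − c(T−t) e^{c²T²/(2z)} √(2π/z) Φ(−cT z^{−1/2}) }, for 0<t<T, z>0. -/

import Mathlib

open MeasureTheory Real Set

noncomputable def stdNormalCDF (x : ℝ) : ℝ :=
  ∫ u in Set.Iic x, (Real.sqrt (2 * Real.pi))⁻¹ * Real.exp (-(u ^ 2) / 2)

noncomputable def bridgeDensity (c t T y z : ℝ) : ℝ :=
  if 0 < y ∧ y ≤ z then
    (1 / Real.sqrt (2 * Real.pi)) * (c * t * (T - t) / T) *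
      Real.exp (-(c ^ 2 / 2) * (T * y - t * z) ^ 2 / (y * z * (z - y))) /
        (y - y ^ 2 / z) ^ ((3 : ℝ) / 2)
  else 0

/-!
Put `θ = t / T` and `s = cT / √z`. The substitutions `u = z / (1 + x²)` and `y = θx - (1 - θ)/x`
turn the exponent of the bridge density into `-(s y)² / 2`. The involution `x ↦ (1 - θ) / (θ x)`
only changes the sign of `y`, so the weight multiplying the Gaussian may be symmetrised under it;
this leaves the integral over the line of `1 / (1 - θ) - 1 / (1 + y²)` against `exp (-(s y)² / 2)`.
The first term is a Gaussian integral. For the second, `exp (-s² (1 + y²) / 2) / (1 + y²)` is the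
integral of `v exp (-v² (1 + y²) / 2)` over `v > s`, and exchanging the order of integration
produces the Gaussian tail.
-/

theorem integral_Ioi_comp_const_div
    {E : Type*} [NormedAddCommGroup E] [NormedSpace ℝ E] {k : ℝ} (hk : 0 < k) (f : ℝ → E) :
    ∫ x in Ioi 0, (k / x ^ 2) • f (k / x) = ∫ x in Ioi 0, f x := by
  have himage : (fun x ↦ k / x) '' Ioi 0 = Ioi 0 := by
    refine Subset.antisymm (image_subset_iff.2 fun x hx ↦ div_pos hk hx) fun y hy ↦ ?_
    exact ⟨k / y, div_pos hk hy, div_div_cancel₀ hk.ne'⟩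
  have hderiv : ∀ x ∈ Ioi (0 : ℝ), HasDerivWithinAt (fun x ↦ k / x) (-(k / x ^ 2)) (Ioi 0) x := by
    intro x hx
    refine (((hasDerivAt_inv (ne_of_gt hx)).const_mul k).congr_deriv ?_).hasDerivWithinAt
    ring
  have hanti : AntitoneOn (fun x ↦ k / x) (Ioi 0) := fun x hx y _ hxy ↦
    div_le_div_of_nonneg_left hk.le hx hxy
  simpa only [himage, neg_neg] using
    (integral_image_eq_integral_deriv_smul_of_antitoneOn measurableSet_Ioi hderiv hanti f).symm

theorem integral_Ioo_eq_integral_Ioi_comp_div_one_add_sq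
    {E : Type*} [NormedAddCommGroup E] [NormedSpace ℝ E] {z : ℝ} (hz : 0 < z) (f : ℝ → E) :
    ∫ u in Ioo 0 z, f u =
      ∫ x in Ioi 0, (2 * z * x / (1 + x ^ 2) ^ 2) • f (z / (1 + x ^ 2)) := by
  have himage : (fun x ↦ z / (1 + x ^ 2)) '' Ioi 0 = Ioo 0 z := by
    refine Subset.antisymm (image_subset_iff.2 fun x (hx : 0 < x) ↦ ?_) fun u ⟨hu, huz⟩ ↦ ?_
    · exact ⟨by positivity, div_lt_self hz (lt_add_of_pos_right 1 (by positivity))⟩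
    · have hpos : 0 < (z - u) / u := div_pos (sub_pos.2 huz) hu
      refine ⟨√((z - u) / u), sqrt_pos.2 hpos, ?_⟩
      simp only [sq_sqrt hpos.le]
      field_simp
      ring
  have hderiv : ∀ x ∈ Ioi (0 : ℝ), HasDerivWithinAt (fun x ↦ z / (1 + x ^ 2))
      (-(2 * z * x / (1 + x ^ 2) ^ 2)) (Ioi 0) x := by
    intro x _
    refine (((hasDerivAt_const x z).fun_div ((hasDerivAt_pow 2 x).const_add 1)
      (by positivity)).congr_deriv ?_).hasDerivWithinAt
    simp only [Nat.cast_ofNat, Nat.add_one_sub_one, pow_one]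
    ring
  have hanti : AntitoneOn (fun x ↦ z / (1 + x ^ 2)) (Ioi 0) := by
    intro x (hx : 0 < x) y _ hxy
    simp only
    gcongr
  simpa only [himage, neg_neg] using
    integral_image_eq_integral_deriv_smul_of_antitoneOn measurableSet_Ioi hderiv hanti f

/-- The Cauchy–Schlömilch substitution, used on `x > 0` with `a, b > 0`, where it is an increasing
bijection onto `ℝ`. -/
noncomputable def cauchySchlomilch (a b x : ℝ) : ℝ := a * x - b / x

namespace cauchySchlomilch

variable {E : Type*} [NormedAddCommGroup E] [NormedSpace ℝ E] {a b x : ℝ}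

@[fun_prop]
lemma measurable : Measurable (cauchySchlomilch a b) := by
  unfold cauchySchlomilch
  fun_prop

lemma hasDerivAt (hx : x ≠ 0) : HasDerivAt (cauchySchlomilch a b) (a + b / x ^ 2) x := by
  refine (((hasDerivAt_id' x).const_mul a).sub ((hasDerivAt_inv hx).const_mul b)).congr_deriv ?_
  ring

lemma monotoneOn (ha : 0 ≤ a) (hb : 0 ≤ b) : MonotoneOn (cauchySchlomilch a b) (Ioi 0) := by
  intro x (hx : 0 < x) y _ hxy
  unfold cauchySchlomilch
  gcongr

lemma image_Ioi (ha : 0 < a) (hb : 0 < b) : cauchySchlomilch a b '' Ioi 0 = univ := by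
  refine eq_univ_of_forall fun y ↦ ?_
  obtain ⟨w, hw, hyw⟩ : ∃ w, w ^ 2 = y ^ 2 + 4 * a * b ∧ |y| < w :=
    ⟨√(y ^ 2 + 4 * a * b), sq_sqrt (by positivity), lt_sqrt_of_sq_lt (by
      rw [sq_abs]
      exact lt_add_of_pos_right _ (by positivity))⟩
  have hpos : 0 < y + w := by linarith [neg_abs_le y]
  refine ⟨(y + w) / (2 * a), div_pos hpos (by positivity), ?_⟩
  unfold cauchySchlomilch
  field_simp
  linarith

lemma apply_reflection (ha : a ≠ 0) (hb : b ≠ 0) :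
    cauchySchlomilch a b (b / a / x) = -cauchySchlomilch a b x := by
  unfold cauchySchlomilch
  field_simp
  ring

lemma add_sq_add_apply_sq (hx : x ≠ 0) :
    (a + b) ^ 2 + cauchySchlomilch a b x ^ 2 = (1 + x ^ 2) * (a ^ 2 + (b / x) ^ 2) := by
  unfold cauchySchlomilch
  field_simp
  ring

theorem integral_comp (ha : 0 < a) (hb : 0 < b) (f : ℝ → E) :
    ∫ x in Ioi 0, (a + b / x ^ 2) • f (cauchySchlomilch a b x) = ∫ y, f y := by
  rw [← integral_image_eq_integral_deriv_smul_of_monotoneOn measurableSet_Ioi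
    (fun x hx ↦ (hasDerivAt (ne_of_gt hx)).hasDerivWithinAt) (monotoneOn ha.le hb.le) f,
    image_Ioi ha hb, setIntegral_univ]

theorem integrableOn_comp_iff (ha : 0 < a) (hb : 0 < b) (f : ℝ → E) :
    IntegrableOn (fun x ↦ (a + b / x ^ 2) • f (cauchySchlomilch a b x)) (Ioi 0) ↔
      Integrable f := by
  rw [← integrableOn_image_iff_integrableOn_deriv_smul_of_monotoneOn measurableSet_Ioi
    (fun x hx ↦ (hasDerivAt (ne_of_gt hx)).hasDerivWithinAt) (monotoneOn ha.le hb.le) f,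
    image_Ioi ha hb, integrableOn_univ]

theorem integral_smul_comp_of_even {h k : ℝ → ℝ} {φ : ℝ → E} (ha : 0 < a) (hb : 0 < b)
    (hφ : φ.Even)
    (hk : ∀ x, 0 < x →
      h x + b / a / x ^ 2 * h (b / a / x) = (a + b / x ^ 2) * k (cauchySchlomilch a b x))
    (hint : IntegrableOn (fun x ↦ h x • φ (cauchySchlomilch a b x)) (Ioi 0))
    (hint' : Integrable fun y ↦ k y • φ y) :
    ∫ x in Ioi 0, h x • φ (cauchySchlomilch a b x) = (2⁻¹ : ℝ) • ∫ y, k y • φ y := by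
  set I := ∫ x in Ioi 0, h x • φ (cauchySchlomilch a b x)
  have hreflect : ∫ x in Ioi 0, (b / a / x ^ 2) • h (b / a / x) • φ (cauchySchlomilch a b x) = I :=
    calc
      _ = ∫ x in Ioi 0, (b / a / x ^ 2) •
            h (b / a / x) • φ (cauchySchlomilch a b (b / a / x)) := by
        simp only [apply_reflection ha.ne' hb.ne', hφ _]
      _ = I := integral_Ioi_comp_const_div (div_pos hb ha)
        fun x ↦ h x • φ (cauchySchlomilch a b x)
  have hdiff : ∀ x ∈ Ioi (0 : ℝ), (b / a / x ^ 2) • h (b / a / x) • φ (cauchySchlomilch a b x) =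
      (a + b / x ^ 2) • k (cauchySchlomilch a b x) • φ (cauchySchlomilch a b x) -
        h x • φ (cauchySchlomilch a b x) := by
    intro x hx
    rw [smul_smul, smul_smul, ← hk x hx, add_smul, add_sub_cancel_left]
  have hI : I = (∫ y, k y • φ y) - I := by
    rw [← integral_comp ha hb, ← integral_sub ((integrableOn_comp_iff ha hb _).2 hint') hint,
      ← setIntegral_congr_fun measurableSet_Ioi hdiff, hreflect]
  rw [eq_inv_smul_iff₀ two_ne_zero, two_smul]
  exact eq_sub_iff_add_eq.1 hI

end cauchySchlomilch

lemma stdNormalCDF_neg (s : ℝ) :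
    stdNormalCDF (-s) = (√(2 * π))⁻¹ * ∫ v in Ioi s, exp (-v ^ 2 / 2) := by
  have hreflect := integral_comp_neg_Iic (-s) fun v ↦ exp (-v ^ 2 / 2)
  simp only [neg_sq, neg_neg] at hreflect
  rw [stdNormalCDF, integral_const_mul, hreflect]

lemma integral_exp_neg_mul_sq_div_two {s : ℝ} (hs : 0 < s) :
    ∫ x : ℝ, exp (-(s * x) ^ 2 / 2) = √(2 * π) / s := by
  have hexp (x : ℝ) : -(s * x) ^ 2 / 2 = -(s ^ 2 / 2) * x ^ 2 := by ring
  simp_rw [hexp, integral_gaussian]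
  rw [div_div_eq_mul_div, sqrt_div' _ (by positivity), sqrt_sq hs.le, mul_comm π]

lemma integrable_exp_neg_mul_sq_div_two {s : ℝ} (hs : s ≠ 0) :
    Integrable fun x : ℝ ↦ exp (-(s * x) ^ 2 / 2) := by
  refine (integrable_exp_neg_mul_sq (b := s ^ 2 / 2) (by positivity)).congr (ae_of_all _ fun x ↦ ?_)
  ring_nf

lemma integrable_exp_neg_mul_sq_div_one_add_sq {s : ℝ} (hs : s ≠ 0) :
    Integrable fun y : ℝ ↦ exp (-(s * y) ^ 2 / 2) / (1 + y ^ 2) := by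
  refine (integrable_exp_neg_mul_sq_div_two hs).mono'
    (Measurable.aestronglyMeasurable (by fun_prop)) (ae_of_all _ fun y ↦ ?_)
  rw [norm_of_nonneg (by positivity)]
  exact div_le_self (exp_nonneg _) (le_add_of_nonneg_right (sq_nonneg y))

lemma integral_Ioi_mul_exp_neg_mul_sq_div_two {p : ℝ} (hp : 0 < p) (s : ℝ) :
    ∫ v in Ioi s, v * exp (-(p * v ^ 2) / 2) = exp (-(p * s ^ 2) / 2) / p := by
  have hderiv : ∀ v ∈ Ici s,
      HasDerivAt (fun v ↦ -(exp (-(p * v ^ 2) / 2) / p)) (v * exp (-(p * v ^ 2) / 2)) v := by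
    intro v _
    refine ((((((hasDerivAt_pow 2 v).const_mul p).fun_neg).div_const 2).exp.div_const
      p).fun_neg).congr_deriv ?_
    simp only [Nat.cast_ofNat, Nat.add_one_sub_one, pow_one]
    field_simp
  have hint : Integrable fun v : ℝ ↦ v * exp (-(p * v ^ 2) / 2) := by
    refine (integrable_mul_exp_neg_mul_sq (half_pos hp)).congr (ae_of_all _ fun v ↦ ?_)
    ring_nf
  have hlim : Filter.Tendsto (fun v : ℝ ↦ -(exp (-(p * v ^ 2) / 2) / p)) .atTop (nhds 0) := by
    have hexp : Filter.Tendsto (fun v : ℝ ↦ -(p * v ^ 2) / 2) .atTop .atBot :=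
      (Filter.tendsto_neg_atTop_atBot.comp
        ((Filter.tendsto_pow_atTop two_ne_zero).const_mul_atTop hp)).atBot_div_const two_pos
    simpa using ((tendsto_exp_atBot.comp hexp).div_const p).neg
  rw [integral_Ioi_of_hasDerivAt_of_tendsto' hderiv hint.integrableOn hlim]
  ring

lemma exp_neg_mul_one_add_sq (s x : ℝ) :
    exp (-((1 + x ^ 2) * s ^ 2) / 2) = exp (-s ^ 2 / 2) * exp (-(s * x) ^ 2 / 2) := by
  rw [← exp_add]
  ring_nf

lemma integral_mul_exp_neg_mul_one_add_sq {v : ℝ} (hv : 0 < v) :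
    ∫ x, v * exp (-((1 + x ^ 2) * v ^ 2) / 2) = √(2 * π) * exp (-v ^ 2 / 2) := by
  simp_rw [exp_neg_mul_one_add_sq v, integral_const_mul, integral_exp_neg_mul_sq_div_two hv]
  field_simp

lemma integrable_prod_mul_exp_neg_mul_one_add_sq {s : ℝ} (hs : 0 ≤ s) :
    Integrable (fun q : ℝ × ℝ ↦ q.2 * exp (-((1 + q.1 ^ 2) * q.2 ^ 2) / 2))
      (volume.prod (volume.restrict (Ioi s))) := by
  refine (integrable_prod_iff' (by fun_prop)).2 ⟨?_, ?_⟩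
  · refine (ae_restrict_iff' measurableSet_Ioi).2 (ae_of_all _ fun v hv ↦ ?_)
    simp_rw [exp_neg_mul_one_add_sq v]
    have hv : v ≠ 0 := (hs.trans_lt hv).ne'
    exact ((integrable_exp_neg_mul_sq_div_two hv).const_mul _).const_mul _
  · have htail : IntegrableOn (fun v : ℝ ↦ √(2 * π) * exp (-v ^ 2 / 2)) (Ioi s) := by
      simpa only [one_mul] using
        ((integrable_exp_neg_mul_sq_div_two one_ne_zero).const_mul _).integrableOn
    refine htail.congr_fun (fun v hv ↦ ?_) measurableSet_Ioi
    have hv : 0 < v := hs.trans_lt hv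
    simp only [norm_mul, norm_of_nonneg hv.le, norm_of_nonneg (exp_nonneg _),
      integral_mul_exp_neg_mul_one_add_sq hv]

theorem integral_exp_neg_mul_one_add_sq_div_one_add_sq {s : ℝ} (hs : 0 ≤ s) :
    ∫ x, exp (-((1 + x ^ 2) * s ^ 2) / 2) / (1 + x ^ 2) =
      √(2 * π) * ∫ v in Ioi s, exp (-v ^ 2 / 2) :=
  calc
    _ = ∫ x, ∫ v in Ioi s, v * exp (-((1 + x ^ 2) * v ^ 2) / 2) := by
      congr! 2 with x
      exact (integral_Ioi_mul_exp_neg_mul_sq_div_two (by positivity) s).symm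
    _ = ∫ v in Ioi s, ∫ x, v * exp (-((1 + x ^ 2) * v ^ 2) / 2) :=
      integral_integral_swap (integrable_prod_mul_exp_neg_mul_one_add_sq hs)
    _ = ∫ v in Ioi s, √(2 * π) * exp (-v ^ 2 / 2) :=
      setIntegral_congr_fun measurableSet_Ioi fun v hv ↦
        integral_mul_exp_neg_mul_one_add_sq (hs.trans_lt hv)
    _ = _ := integral_const_mul _ _

theorem integral_exp_neg_mul_sq_div_one_add_sq {s : ℝ} (hs : 0 ≤ s) :
    ∫ x, exp (-(s * x) ^ 2 / 2) / (1 + x ^ 2) = 2 * π * exp (s ^ 2 / 2) * stdNormalCDF (-s) := by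
  have htail := integral_exp_neg_mul_one_add_sq_div_one_add_sq hs
  simp_rw [exp_neg_mul_one_add_sq s, mul_div_assoc, integral_const_mul] at htail
  have hexp : exp (s ^ 2 / 2) * exp (-s ^ 2 / 2) = 1 := by
    rw [← exp_add, ← add_div, add_neg_cancel, zero_div, exp_zero]
  have hsqrt : 2 * π * (√(2 * π))⁻¹ = √(2 * π) := div_sqrt
  rw [stdNormalCDF_neg]
  calc
    _ = exp (s ^ 2 / 2) * (exp (-s ^ 2 / 2) * ∫ x, exp (-(s * x) ^ 2 / 2) / (1 + x ^ 2)) := by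
      rw [← mul_assoc, hexp, one_mul]
    _ = exp (s ^ 2 / 2) * (2 * π * (√(2 * π))⁻¹ * ∫ v in Ioi s, exp (-v ^ 2 / 2)) := by
      rw [htail, hsqrt]
    _ = _ := by ring

section Bridge

variable {θ s c t T x z : ℝ}

lemma inv_add_reflection_eq (hθ₀ : θ ≠ 0) (hθ₁ : θ ≠ 1) (hx : x ≠ 0) :
    (x ^ 2 * (1 + x ^ 2))⁻¹ + (1 - θ) / θ / x ^ 2 *
        (((1 - θ) / θ / x) ^ 2 * (1 + ((1 - θ) / θ / x) ^ 2))⁻¹ =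
      (θ + (1 - θ) / x ^ 2) *
        ((1 - θ)⁻¹ - (1 + cauchySchlomilch θ (1 - θ) x ^ 2)⁻¹) := by
  have hsq := cauchySchlomilch.add_sq_add_apply_sq (a := θ) (b := 1 - θ) hx
  rw [add_sub_cancel, one_pow] at hsq
  have hθ₁' : 1 - θ ≠ 0 := sub_ne_zero.2 hθ₁.symm
  rw [hsq]
  field_simp
  ring

lemma integrableOn_inv_mul_exp_neg_cauchySchlomilch_sq (hθ₀ : 0 < θ) (hθ₁ : θ < 1) (hs : s ≠ 0) :
    IntegrableOn (fun x ↦ (x ^ 2 * (1 + x ^ 2))⁻¹ *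
      exp (-(s * cauchySchlomilch θ (1 - θ) x) ^ 2 / 2)) (Ioi 0) := by
  have hθ₁' : 0 < 1 - θ := sub_pos.2 hθ₁
  have hdom := ((cauchySchlomilch.integrableOn_comp_iff hθ₀ hθ₁' _).2
    (integrable_exp_neg_mul_sq_div_two hs)).const_mul (1 - θ)⁻¹
  refine hdom.mono' (by fun_prop)
    ((ae_restrict_iff' measurableSet_Ioi).2 (ae_of_all _ fun x (hx : 0 < x) ↦ ?_))
  rw [norm_of_nonneg (by positivity), smul_eq_mul, ← mul_assoc]
  gcongr
  calc
    (x ^ 2 * (1 + x ^ 2))⁻¹ ≤ (x ^ 2)⁻¹ := by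
      gcongr
      exact le_mul_of_one_le_right (sq_nonneg x) (le_add_of_nonneg_right (sq_nonneg x))
    _ = (1 - θ)⁻¹ * ((1 - θ) / x ^ 2) := by field_simp
    _ ≤ (1 - θ)⁻¹ * (θ + (1 - θ) / x ^ 2) := by
      gcongr
      exact le_add_of_nonneg_left hθ₀.le

theorem integral_inv_mul_exp_neg_cauchySchlomilch_sq (hθ₀ : 0 < θ) (hθ₁ : θ < 1) (hs : 0 < s) :
    ∫ x in Ioi 0, (x ^ 2 * (1 + x ^ 2))⁻¹ * exp (-(s * cauchySchlomilch θ (1 - θ) x) ^ 2 / 2) =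
      √(2 * π) / (2 * s * (1 - θ)) - π * exp (s ^ 2 / 2) * stdNormalCDF (-s) := by
  have hgauss := (integrable_exp_neg_mul_sq_div_two hs.ne').const_mul (1 - θ)⁻¹
  have hmills := integrable_exp_neg_mul_sq_div_one_add_sq hs.ne'
  have hsplit (y : ℝ) : ((1 - θ)⁻¹ - (1 + y ^ 2)⁻¹) * exp (-(s * y) ^ 2 / 2) =
      (1 - θ)⁻¹ * exp (-(s * y) ^ 2 / 2) - exp (-(s * y) ^ 2 / 2) / (1 + y ^ 2) := by
    ring
  have heven : Function.Even fun y : ℝ ↦ exp (-(s * y) ^ 2 / 2) := fun y ↦ by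
    simp only [mul_neg, neg_sq]
  have hint : Integrable fun y ↦ ((1 - θ)⁻¹ - (1 + y ^ 2)⁻¹) • exp (-(s * y) ^ 2 / 2) := by
    simp only [smul_eq_mul, hsplit]
    exact hgauss.sub hmills
  have hfold := cauchySchlomilch.integral_smul_comp_of_even hθ₀ (sub_pos.2 hθ₁) heven
    (fun x hx ↦ inv_add_reflection_eq hθ₀.ne' hθ₁.ne hx.ne')
    (integrableOn_inv_mul_exp_neg_cauchySchlomilch_sq hθ₀ hθ₁ hs.ne') hint
  simp only [smul_eq_mul, hsplit] at hfold
  rw [hfold, integral_sub hgauss hmills, integral_const_mul, integral_exp_neg_mul_sq_div_two hs,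
    integral_exp_neg_mul_sq_div_one_add_sq hs.le]
  have hθ₁' : 1 - θ ≠ 0 := (sub_pos.2 hθ₁).ne'
  field_simp

lemma sub_sq_div_rpow_three_halves (hz : 0 < z) (hx : 0 ≤ x) :
    (z / (1 + x ^ 2) - (z / (1 + x ^ 2)) ^ 2 / z) ^ (3 / 2 : ℝ) = (√z * x / (1 + x ^ 2)) ^ 3 := by
  have hbase : z / (1 + x ^ 2) - (z / (1 + x ^ 2)) ^ 2 / z = (√z * x / (1 + x ^ 2)) ^ 2 := by
    rw [div_pow (√z * x), mul_pow, sq_sqrt hz.le]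
    field_simp
    ring
  rw [hbase, ← rpow_natCast, ← rpow_natCast, ← rpow_mul (by positivity)]
  norm_num

lemma bridgeDensity_exponent_div_one_add_sq (hz : 0 < z) (hT : T ≠ 0) (hx : x ≠ 0) :
    -(c ^ 2 / 2) * (T * (z / (1 + x ^ 2)) - t * z) ^ 2 /
        (z / (1 + x ^ 2) * z * (z - z / (1 + x ^ 2))) =
      -(c * T / √z * cauchySchlomilch (t / T) (1 - t / T) x) ^ 2 / 2 := by
  have hsub : z - z / (1 + x ^ 2) = z * x ^ 2 / (1 + x ^ 2) := by
    field_simp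
    ring
  rw [hsub, mul_pow, div_pow _ √z, sq_sqrt hz.le, cauchySchlomilch]
  field_simp
  ring

lemma bridgeDensity_div_one_add_sq (hz : 0 < z) (hT : T ≠ 0) (hx : 0 < x) :
    bridgeDensity c t T (z / (1 + x ^ 2)) z =
      1 / √(2 * π) * (c * t * (T - t) / T) *
        exp (-(c * T / √z * cauchySchlomilch (t / T) (1 - t / T) x) ^ 2 / 2) /
          (√z * x / (1 + x ^ 2)) ^ 3 := by
  have hle : z / (1 + x ^ 2) ≤ z := div_le_self hz.le (le_add_of_nonneg_right (sq_nonneg x))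
  rw [bridgeDensity, if_pos ⟨by positivity, hle⟩, sub_sq_div_rpow_three_halves hz hx.le,
    bridgeDensity_exponent_div_one_add_sq hz hT hx.ne']

lemma sq_mul_bridgeDensity_div_one_add_sq (hz : 0 < z) (hT : T ≠ 0) (hx : 0 < x) :
    (2 * z * x / (1 + x ^ 2) ^ 2) •
        ((z / (1 + x ^ 2)) ^ 2 * bridgeDensity c t T (z / (1 + x ^ 2)) z) =
      2 * z ^ 2 / √(2 * π) * (c * T / √z) * (t / T) * (1 - t / T) *
        ((x ^ 2 * (1 + x ^ 2))⁻¹ *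
          exp (-(c * T / √z * cauchySchlomilch (t / T) (1 - t / T) x) ^ 2 / 2)) := by
  rw [bridgeDensity_div_one_add_sq hz hT hx, smul_eq_mul]
  generalize exp (-(c * T / √z * cauchySchlomilch (t / T) (1 - t / T) x) ^ 2 / 2) = G
  have hsqrt : √z ^ 2 = z := sq_sqrt hz.le
  have : 0 < √z := sqrt_pos.2 hz
  field_simp
  rw [hsqrt]
  ring

theorem integral_sq_mul_bridgeDensity (hc : 0 < c) (ht : 0 < t) (htT : t < T) (hz : 0 < z) :
    ∫ u in Ioo 0 z, u ^ 2 * bridgeDensity c t T u z =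
      t / T * z ^ 2 * (1 - (1 - t / T) * (c * T / √z) * √(2 * π) *
        exp ((c * T / √z) ^ 2 / 2) * stdNormalCDF (-(c * T / √z))) := by
  have hT : 0 < T := ht.trans htT
  have hθ₁ : t / T < 1 := (div_lt_one hT).2 htT
  have hs : 0 < c * T / √z := div_pos (mul_pos hc hT) (sqrt_pos.2 hz)
  rw [integral_Ioo_eq_integral_Ioi_comp_div_one_add_sq hz,
    setIntegral_congr_fun measurableSet_Ioi fun x hx ↦
      sq_mul_bridgeDensity_div_one_add_sq hz hT.ne' hx,
    integral_const_mul, integral_inv_mul_exp_neg_cauchySchlomilch_sq (div_pos ht hT) hθ₁ hs]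
  have hπ : 2 * π = √(2 * π) ^ 2 := (sq_sqrt (by positivity)).symm
  have hθ₁' : 1 - t / T ≠ 0 := (sub_pos.2 hθ₁).ne'
  generalize c * T / √z = s at *
  generalize t / T = θ at *
  field_simp
  linear_combination -(θ * (1 - θ) * s * exp (s ^ 2 / 2) * stdNormalCDF (-s)) * hπ

end Bridge

theorem bridge_second_moment (c t T z : ℝ) (hc : 0 < c) (ht : 0 < t) (htT : t < T)
    (hz : 0 < z) :
    (∫ u in Set.Ioo (0 : ℝ) z, u ^ 2 * bridgeDensity c t T u z) =
      t / T * z ^ 2 *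
        (1 - c * (T - t) * Real.exp (c ^ 2 * T ^ 2 / (2 * z)) *
          Real.sqrt (2 * Real.pi / z) * stdNormalCDF (-(c * T * z ^ (-(1 : ℝ) / 2)))) := by
  have hrpow : c * T * z ^ (-(1 : ℝ) / 2) = c * T / √z := by
    rw [neg_div, rpow_neg hz.le, ← sqrt_eq_rpow, div_eq_mul_inv]
  have hexp : c ^ 2 * T ^ 2 / (2 * z) = (c * T / √z) ^ 2 / 2 := by
    rw [div_pow, sq_sqrt hz.le]
    ring
  have hT : T ≠ 0 := (ht.trans htT).ne'
  rw [integral_sq_mul_bridgeDensity hc ht htT hz, hrpow, hexp, sqrt_div (by positivity)]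
  field_simp
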